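/- Let K be a field of characteristic 0. Let P be a multilinear polynomial of degree 5 in one formal bilinear operation such that, in every alternative dialgebra over K, P vanishes identically when the formal operation is interpreted as the dicommutator ⟨a,b⟩ = a ⊣ b − b ⊢ a. Then P vanishes identically in every Malcev dialgebra over K; in other words, there are no special identities for Malcev dialgebras in degree 5. -/

import Mathlib

/-- Formal monomials of a single binary operation in variables `x_0, …, x_{n-1}`:
binary trees whose leaves are labelled by variables. -/
inductive BTree (n : ℕ) : Type
  | leaf : Fin n → BTree n
  | node : BTree n → BTree n → BTree n

namespace BTree

/-- Evaluate a monomial in an algebra with binary operation `m`,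
assigning the value `x i` to the variable `i`. -/
def eval {n : ℕ} {V : Type} (m : V → V → V) (x : Fin n → V) : BTree n → V
  | leaf i => x i
  | node s t => m (eval m x s) (eval m x t)

/-- The multiset of variables occurring in a monomial. -/
def vars {n : ℕ} : BTree n → Multiset (Fin n)
  | leaf i => {i}
  | node s t => vars s + vars t

/-- A monomial of degree `n` is multilinear if each of the `n` variables
occurs in it exactly once. -/
def Multilinear {n : ℕ} (t : BTree n) : Prop :=
  vars t = (Finset.univ : Finset (Fin n)).val

end BTree

/-- A right Malcev dialgebra structure given by the bilinear product `f`. -/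
structure IsMalcevDialgebra {K V : Type*} [Field K] [AddCommGroup V] [Module K V]
    (f : V →ₗ[K] V →ₗ[K] V) : Prop where
  right_anticomm : ∀ a b c : V, f a (f b c) + f a (f c b) = 0
  malcev : ∀ a b c d : V, f (f (f a b) c) d - f (f (f a d) b) c - f (f a (f c d)) b
    - f (f a c) (f b d) - f a (f (f b c) d) = 0

/-- The Jacobian in right normalized form. -/
def jacobian {V : Type*} [Sub V] (m : V → V → V) (a b c : V) : V :=
  m (m a b) c - m (m a c) b - m a (m b c)

namespace IsMalcevDialgebra

variable {K V W : Type*} [Field K] [AddCommGroup V] [Module K V]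
  [AddCommGroup W] [Module K W] {f : V →ₗ[K] V →ₗ[K] V}

theorem right_anticomm' (hf : IsMalcevDialgebra f) (a b c : V) : f a (f b c) = -f a (f c b) :=
  eq_neg_of_add_eq_zero_left (hf.right_anticomm a b c)

theorem right_anticomm₂ (hf : IsMalcevDialgebra f) (a b c d : V) :
    f a (f (f b c) d) = -f a (f (f c b) d) := by
  rw [hf.right_anticomm' a (f b c) d, hf.right_anticomm' a (f c b) d, hf.right_anticomm' d b c]
  simp

/-- Modulo left-normed words and products `(x (y z)) w`, the product `(x b) (c d)` agrees with
`x ((b c) d)`. -/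
theorem map_mul_mul_eq (hf : IsMalcevDialgebra f) (π : V →ₗ[K] W) (x b c d : V)
    (h₁ : π (f (f (f x c) b) d) = 0) (h₂ : π (f (f (f x d) c) b) = 0)
    (h₃ : π (f (f x (f b d)) c) = 0) :
    π (f (f x b) (f c d)) = π (f x (f (f b c) d)) := by
  have h := congrArg π (hf.malcev x c b d)
  simp only [map_sub, map_zero, h₁, h₂, h₃] at h
  rw [hf.right_anticomm₂ x b c d, map_neg]
  linear_combination (norm := module) (-1 : K) • h

end IsMalcevDialgebra

/-- The linear map `π` annihilates the spanning elements with center `a` of the multilinear part of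
degree 5, for all orders of the remaining variables that are admitted by `R`. -/
structure AnnihilatesNormalForms {K V W : Type*} [Field K] [AddCommGroup V] [Module K V]
    [AddCommGroup W] [Module K W] (f : V →ₗ[K] V →ₗ[K] V) (π : V →ₗ[K] W) (a : V)
    (R : V → V → V → V → Prop) : Prop where
  swap₁ : ∀ {b c d e}, R b c d e → R c b d e
  swap₂ : ∀ {b c d e}, R b c d e → R b d c e
  swap₃ : ∀ {b c d e}, R b c d e → R b c e d
  word : ∀ {b c d e}, R b c d e → π (f (f (f (f a b) c) d) e) = 0
  jacobian_mul_mul : ∀ {b c d e}, R b c d e → π (f (f (jacobian (f · ·) a b c) d) e) = 0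
  mul_jacobian_mul : ∀ {b c d e}, R b c d e → π (f (f a (jacobian (f · ·) b c d)) e) = 0
  mul_jacobian_mul' : ∀ {b c d e}, R b c d e → π (f a (f (jacobian (f · ·) b c d) e)) = 0

namespace AnnihilatesNormalForms

variable {K V W : Type*} [Field K] [AddCommGroup V] [Module K V]
  [AddCommGroup W] [Module K W] {f : V →ₗ[K] V →ₗ[K] V} {π : V →ₗ[K] W} {a : V}
  {R : V → V → V → V → Prop} {b c d e : V}

theorem map_two_one_one (h : AnnihilatesNormalForms f π a R) (r : R b c d e) :
    π (f (f (f a (f b c)) d) e) = 0 := by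
  have h₁ := h.jacobian_mul_mul r
  simpa [jacobian, h.word r, h.word (h.swap₁ r)] using h₁

theorem map_one_two_one_eq (hf : IsMalcevDialgebra f) (h : AnnihilatesNormalForms f π a R)
    (r : R b c d e) :
    π (f (f (f a b) (f c d)) e) = π (f (f a (f (f b c) d)) e) :=
  hf.map_mul_mul_eq (π ∘ₗ f.flip e) a b c d (h.word (h.swap₁ r))
    (h.word (h.swap₁ (h.swap₂ (h.swap₁ r)))) (h.map_two_one_one (h.swap₂ r))

theorem map_three_one [CharZero K] (hf : IsMalcevDialgebra f) (h : AnnihilatesNormalForms f π a R)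
    (r : R b c d e) : π (f (f a (f (f b c) d)) e) = 0 := by
  have skew₁ : ∀ b c d, π (f (f a (f (f b c) d)) e) = -π (f (f a (f (f c b) d)) e) := by
    intro b c d
    rw [hf.right_anticomm₂ a b c d]; simp
  have skew₂ : ∀ {b c d}, R b c d e →
      π (f (f a (f (f b c) d)) e) = -π (f (f a (f (f b d) c)) e) := by
    intro b c d r
    rw [← map_one_two_one_eq hf h r, ← map_one_two_one_eq hf h (h.swap₂ r),
      hf.right_anticomm' (f a b) c d]
    simp
  have h₂ := h.mul_jacobian_mul r
  simp only [jacobian, map_sub, LinearMap.sub_apply] at h₂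
  rw [hf.right_anticomm' a b (f c d)] at h₂
  simp only [map_neg, LinearMap.neg_apply] at h₂
  have h₃ := skew₂ r
  have h₄ := skew₂ (h.swap₁ r)
  have h₅ := skew₁ b c d
  have h₆ : (3 : K) • π (f (f a (f (f b c) d)) e) = 0 := by
    linear_combination (norm := module) h₂ + h₃ + h₅ - h₄
  simpa using h₆

theorem map_one_two_one [CharZero K] (hf : IsMalcevDialgebra f)
    (h : AnnihilatesNormalForms f π a R) (r : R b c d e) :
    π (f (f (f a b) (f c d)) e) = 0 := by
  rw [map_one_two_one_eq hf h r, map_three_one hf h r]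

theorem map_one_one_two_eq [CharZero K] (hf : IsMalcevDialgebra f)
    (h : AnnihilatesNormalForms f π a R) (r : R b c d e) :
    π (f (f (f a b) c) (f d e)) = π (f (f a b) (f (f c d) e)) :=
  hf.map_mul_mul_eq π (f a b) c d e (h.word (h.swap₂ r))
    (h.word (h.swap₂ (h.swap₃ (h.swap₂ r)))) (map_one_two_one hf h (h.swap₃ r))

theorem map_one_three_skew [CharZero K] (hf : IsMalcevDialgebra f)
    (h : AnnihilatesNormalForms f π a R) (r : R b c d e) :
    π (f (f a b) (f (f c d) e)) = -π (f (f a b) (f (f c e) d)) := by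
  rw [← map_one_one_two_eq hf h r, ← map_one_one_two_eq hf h (h.swap₃ r),
    hf.right_anticomm' (f (f a b) c) d e, map_neg]

theorem map_one_three_skew' (hf : IsMalcevDialgebra f) :
    π (f (f a b) (f (f c d) e)) = -π (f (f a b) (f (f d c) e)) := by
  rw [hf.right_anticomm₂ (f a b) c d e, map_neg]

theorem map_four_skew (hf : IsMalcevDialgebra f) :
    π (f a (f (f (f b c) d) e)) = -π (f a (f (f (f c b) d) e)) := by
  rw [hf.right_anticomm' a (f (f b c) d) e, hf.right_anticomm' a (f (f c b) d) e,
    hf.right_anticomm₂ e b c d]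
  simp

/-- The Malcev identity with a product as its second argument. -/
theorem map_two_two_eq [CharZero K] (hf : IsMalcevDialgebra f)
    (h : AnnihilatesNormalForms f π a R) (r : R b c d e) :
    π (f (f a (f b c)) (f d e)) =
      -π (f (f a b) (f (f d e) c)) - π (f a (f (f (f d e) b) c)) := by
  have h₁ := congrArg π (hf.malcev a (f d e) b c)
  simp only [map_sub, map_zero, h.map_two_one_one
    (h.swap₂ (h.swap₁ (h.swap₃ (h.swap₂ r)))),
    map_one_two_one hf h (h.swap₃ (h.swap₂ (h.swap₁ r)))] at h₁
  linear_combination (norm := module) (-1 : K) • h₁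

/-- The Malcev identity with a product as its third argument. -/
theorem map_two_two_eq' [CharZero K] (hf : IsMalcevDialgebra f)
    (h : AnnihilatesNormalForms f π a R) (r : R b c d e) :
    π (f (f a (f b c)) (f d e)) =
      -π (f (f a e) (f (f d b) c)) + π (f a (f (f (f b c) d) e)) := by
  have h₁ := congrArg π (hf.malcev a d (f b c) e)
  have h₂ := map_one_one_two_eq hf h (h.swap₁ (h.swap₂ (h.swap₃ (h.swap₁ (h.swap₂ r)))))
  have h₃ := map_three_one hf h (h.swap₃ r)
  have h₄ := map_one_two_one hf h (h.swap₁ (h.swap₂ r))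
  rw [hf.right_anticomm' a (f d (f b c)) e, hf.right_anticomm' e d (f b c)] at h₁
  rw [map_neg, neg_neg, hf.right_anticomm' a e] at h₁
  simp only [map_sub, map_zero, map_neg, h₂, h₃, h₄] at h₁
  linear_combination (norm := module) (-1 : K) • h₁

theorem map_one_three_skew_first [CharZero K] (hf : IsMalcevDialgebra f)
    (h : AnnihilatesNormalForms f π a R) (r : R b c d e) :
    π (f (f a b) (f (f d e) c)) = -π (f (f a c) (f (f d e) b)) ∧
      π (f a (f (f (f d e) b) c)) = -π (f a (f (f (f d e) c) b)) := by
  have h₁ := map_two_two_eq hf h r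
  have h₂ := map_two_two_eq hf h (h.swap₁ r)
  rw [hf.right_anticomm' a b c, map_neg, LinearMap.neg_apply, map_neg] at h₁
  have r' : R d e b c := h.swap₂ (h.swap₁ (h.swap₃ (h.swap₂ r)))
  have h₃ := map_two_two_eq' hf h r'
  have h₄ := map_two_two_eq' hf h (h.swap₃ r')
  rw [hf.right_anticomm' _ b c, map_neg] at h₃
  have skew {p q : V} (r : R p q d e) :
      π (f (f a p) (f (f q d) e)) = π (f (f a p) (f (f d e) q)) := by
    rw [map_one_three_skew' hf, map_one_three_skew hf h (h.swap₂ r), neg_neg]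
  rw [skew (h.swap₁ r)] at h₃
  rw [skew r] at h₄
  constructor
  · refine sub_eq_zero.1 ((smul_eq_zero_iff_right (two_ne_zero' K)).1 ?_)
    linear_combination (norm := module) h₁ + h₂ + h₃ + h₄
  · refine sub_eq_zero.1 ((smul_eq_zero_iff_right (two_ne_zero' K)).1 ?_)
    linear_combination (norm := module) h₁ + h₂ - h₃ - h₄

theorem map_one_three_and_four [CharZero K] (hf : IsMalcevDialgebra f)
    (h : AnnihilatesNormalForms f π a R) (r : R b c d e) :
    π (f (f a b) (f (f c d) e)) = 0 ∧ π (f a (f (f (f b c) d) e)) = 0 := by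
  obtain ⟨U, hU⟩ : ∃ U : V → V → V → V → W, ∀ b c d e, π (f (f a b) (f (f c d) e)) = U b c d e :=
    ⟨_, fun _ _ _ _ => rfl⟩
  obtain ⟨Z, hZ⟩ : ∃ Z : V → V → V → V → W, ∀ b c d e, π (f a (f (f (f b c) d) e)) = Z b c d e :=
    ⟨_, fun _ _ _ _ => rfl⟩
  have U₂ (b c d e : V) : U b c d e = -U b d c e := by
    rw [← hU, ← hU, map_one_three_skew' hf]
  have U₃ {b c d e : V} (r : R b c d e) : U b c d e = -U b c e d := by
    rw [← hU, ← hU, map_one_three_skew hf h r]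
  have U₁ {b c d e : V} (r : R b c d e) : U b c d e = -U c b d e := by
    have h₁ := (map_one_three_skew_first hf h r).1
    rw [hU, hU] at h₁
    rw [U₂ b c d e, U₃ (h.swap₂ r), h₁, U₂ c b d e, U₃ (h.swap₂ (h.swap₁ r))]
  have Z₁ (b c d e : V) : Z b c d e = -Z c b d e := by
    rw [← hZ, ← hZ, map_four_skew hf]
  have Z₃ {b c d e : V} (r : R b c d e) : Z b c d e = -Z b c e d := by
    have h₁ := (map_one_three_skew_first hf h (h.swap₂ (h.swap₁ (h.swap₃ (h.swap₂ r))))).2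
    rwa [hZ, hZ] at h₁
  have Z_add {b c d e : V} (r : R b c d e) : Z b c d e + Z d e b c = (-2 : K) • U b c d e := by
    have h₁ := map_two_two_eq hf h r
    have h₂ := map_two_two_eq' hf h r
    simp only [hU, hZ] at h₁ h₂
    have h₃ : U b d e c = U b c d e := by
      rw [U₃ (h.swap₃ (h.swap₂ r)), U₂ b d c e, neg_neg]
    have h₄ : U e d b c = -U b c d e := by
      rw [U₃ r, U₂ b c e d, U₁ (h.swap₂ (h.swap₃ r)), U₃ (h.swap₁ (h.swap₂ (h.swap₃ r))),
        U₂ e b d c, neg_neg, neg_neg, neg_neg]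
    rw [h₁, h₃, h₄] at h₂
    linear_combination (norm := module) -h₂
  have Z_cycle {b c d e : V} (r : R b c d e) : Z b c d e + Z c d b e + Z d b c e = 0 := by
    have h₁ := h.mul_jacobian_mul' r
    have h₂ : π (f a (f (f b (f c d)) e)) = -Z c d b e := by
      rw [← hZ, hf.right_anticomm₂ a b (f c d) e, map_neg]
    simp only [jacobian, map_sub, LinearMap.sub_apply, h₂, hZ] at h₁
    rw [Z₁ d b c e]
    linear_combination (norm := module) h₁
  have r₂ : R c d b e := h.swap₂ (h.swap₁ r)
  have r₃ : R d b c e := h.swap₁ (h.swap₂ r)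
  have u₂ : U c d b e = U b c d e := by rw [U₂ c d b e, U₁ (h.swap₁ r), neg_neg]
  have u₃ : U d b c e = U b c d e := by rw [U₁ r₃, U₂ b d c e, neg_neg]
  have a₁ := Z_add r
  have a₂ := Z_add r₂
  have a₃ := Z_add r₃
  rw [u₂] at a₂
  rw [u₃] at a₃
  have c₁ := Z_cycle r
  have c₂ := Z_cycle (h.swap₃ r)
  have c₃ := Z_cycle (h.swap₃ r₂)
  have c₄ := Z_cycle (h.swap₃ r₃)
  rw [Z₃ (h.swap₃ r), Z₃ (h.swap₂ (h.swap₃ (h.swap₁ r))), Z₁ e b c d] at c₂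
  rw [Z₃ (h.swap₃ r₂), Z₃ (h.swap₃ (h.swap₂ (h.swap₃ r₃))), Z₁ e c d b] at c₃
  rw [Z₃ (h.swap₃ r₃), Z₃ (h.swap₃ (h.swap₂ (h.swap₃ r))), Z₁ e d b c] at c₄
  have hu : U b c d e = 0 := by
    refine (smul_eq_zero_iff_right (show (12 : K) ≠ 0 by norm_num)).1 ?_
    linear_combination (norm := module) (2 : K) • (a₁ + a₂ + a₃) - c₁ + c₂ + c₃ + c₄
  refine ⟨(hU ..).trans hu, (hZ ..).trans ?_⟩
  refine (smul_eq_zero_iff_right (two_ne_zero' K)).1 ?_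
  linear_combination (norm := module) c₁ - c₂ - a₂ - a₃ + (4 : K) • hu

theorem map_one_three [CharZero K] (hf : IsMalcevDialgebra f)
    (h : AnnihilatesNormalForms f π a R) (r : R b c d e) :
    π (f (f a b) (f (f c d) e)) = 0 :=
  (map_one_three_and_four hf h r).1

theorem map_four [CharZero K] (hf : IsMalcevDialgebra f)
    (h : AnnihilatesNormalForms f π a R) (r : R b c d e) :
    π (f a (f (f (f b c) d) e)) = 0 :=
  (map_one_three_and_four hf h r).2

theorem map_one_one_two [CharZero K] (hf : IsMalcevDialgebra f)
    (h : AnnihilatesNormalForms f π a R) (r : R b c d e) :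
    π (f (f (f a b) c) (f d e)) = 0 := by
  rw [map_one_one_two_eq hf h r, map_one_three hf h r]

theorem map_two_two [CharZero K] (hf : IsMalcevDialgebra f)
    (h : AnnihilatesNormalForms f π a R) (r : R b c d e) :
    π (f (f a (f b c)) (f d e)) = 0 := by
  have r' : R b d e c := h.swap₃ (h.swap₂ r)
  rw [map_two_two_eq hf h r, map_one_three hf h r', map_four hf h (h.swap₂ (h.swap₁ r'))]
  simp

theorem map_four' [CharZero K] (hf : IsMalcevDialgebra f)
    (h : AnnihilatesNormalForms f π a R) (r : R b c d e) :
    π (f a (f (f b c) (f d e))) = 0 := by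
  have h₁ := congrArg π (hf.malcev a b c (f d e))
  have r' : R d e b c := h.swap₂ (h.swap₁ (h.swap₃ (h.swap₂ r)))
  rw [hf.right_anticomm' a c, hf.right_anticomm' (f a c) b] at h₁
  simpa [map_one_one_two hf h r, h.map_two_one_one r', map_three_one hf h (h.swap₃ r'),
    map_one_three hf h (h.swap₁ (h.swap₂ (h.swap₃ r')))] using h₁

end AnnihilatesNormalForms

/-- The elements `(((a b) c) d) e`, `(J(a, b, c) d) e`, `(a J(b, c, d)) e` and `a (J(b, c, d) e)`,
where `J` is the Jacobian and `y = (a, b, c, d, e)`. -/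
def normalForm {V : Type*} [Sub V] (m : V → V → V) (q : Fin 4) (y : Fin 5 → V) : V :=
  ![m (m (m (m (y 0) (y 1)) (y 2)) (y 3)) (y 4),
    m (m (jacobian m (y 0) (y 1) (y 2)) (y 3)) (y 4),
    m (m (y 0) (jacobian m (y 1) (y 2) (y 3))) (y 4),
    m (y 0) (m (jacobian m (y 1) (y 2) (y 3)) (y 4))] q

/-- A linear map that annihilates the normal forms on all arrangements of `x` annihilates the normal
forms with any given center. -/
theorem annihilatesNormalForms_of_forall_perm {K V W : Type*} [Field K] [AddCommGroup V]
    [Module K V] [AddCommGroup W] [Module K W] (f : V →ₗ[K] V →ₗ[K] V) (π : V →ₗ[K] W)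
    (x : Fin 5 → V) (hπ : ∀ q (σ : Equiv.Perm (Fin 5)), π (normalForm (f · ·) q (x ∘ σ)) = 0)
    (a : V) :
    AnnihilatesNormalForms f π a
      (fun b c d e => ∃ σ : Equiv.Perm (Fin 5), x ∘ σ = ![a, b, c, d, e]) where
  swap₁ := by
    rintro b c d e ⟨σ, hσ⟩
    refine ⟨σ * Equiv.swap 1 2, ?_⟩
    rw [Equiv.Perm.coe_mul, ← Function.comp_assoc, hσ]
    ext i; fin_cases i <;> rfl
  swap₂ := by
    rintro b c d e ⟨σ, hσ⟩
    refine ⟨σ * Equiv.swap 2 3, ?_⟩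
    rw [Equiv.Perm.coe_mul, ← Function.comp_assoc, hσ]
    ext i; fin_cases i <;> rfl
  swap₃ := by
    rintro b c d e ⟨σ, hσ⟩
    refine ⟨σ * Equiv.swap 3 4, ?_⟩
    rw [Equiv.Perm.coe_mul, ← Function.comp_assoc, hσ]
    ext i; fin_cases i <;> rfl
  word := by
    rintro b c d e ⟨σ, hσ⟩
    have h := hπ 0 σ
    rwa [hσ] at h
  jacobian_mul_mul := by
    rintro b c d e ⟨σ, hσ⟩
    have h := hπ 1 σ
    rwa [hσ] at h
  mul_jacobian_mul := by
    rintro b c d e ⟨σ, hσ⟩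
    have h := hπ 2 σ
    rwa [hσ] at h
  mul_jacobian_mul' := by
    rintro b c d e ⟨σ, hσ⟩
    have h := hπ 3 σ
    rwa [hσ] at h

namespace BTree

variable {n : ℕ} {t : BTree n}

theorem card_vars_pos (t : BTree n) : 0 < Multiset.card t.vars := by
  induction t with
  | leaf i => simp [vars]
  | node s t hs ht => simp only [vars, Multiset.card_add]; omega

theorem exists_eq_leaf (h : Multiset.card t.vars = 1) : ∃ i, t = leaf i := by
  cases t with
  | leaf i => exact ⟨i, rfl⟩
  | node s t =>
    simp only [vars, Multiset.card_add] at h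
    have := s.card_vars_pos
    have := t.card_vars_pos
    omega

/-- The two factors of a monomial of degree at least 2, with their degrees. -/
theorem exists_eq_node {d : ℕ} (h : Multiset.card t.vars = d + 2) :
    ∃ k ≤ d, ∃ s u : BTree n, t = node s u ∧ Multiset.card s.vars = k + 1 ∧
      Multiset.card u.vars = d - k + 1 := by
  cases t with
  | leaf i => simp [vars] at h
  | node s t =>
    simp only [vars, Multiset.card_add] at h
    have := s.card_vars_pos
    have := t.card_vars_pos
    exact ⟨Multiset.card s.vars - 1, by omega, s, t, rfl, by omega, by omega⟩

theorem exists_eq_of_card_two (h : Multiset.card t.vars = 2) :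
    ∃ i j, t = node (leaf i) (leaf j) := by
  obtain ⟨k, hk, s, u, rfl, hs, hu⟩ := exists_eq_node h
  obtain rfl : k = 0 := by omega
  obtain ⟨i, rfl⟩ := exists_eq_leaf hs
  obtain ⟨j, rfl⟩ := exists_eq_leaf hu
  exact ⟨i, j, rfl⟩

theorem exists_eq_of_card_three (h : Multiset.card t.vars = 3) :
    ∃ i j k, t = node (node (leaf i) (leaf j)) (leaf k) ∨
      t = node (leaf i) (node (leaf j) (leaf k)) := by
  obtain ⟨k, hk, s, u, rfl, hs, hu⟩ := exists_eq_node h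
  interval_cases k
  · obtain ⟨i, rfl⟩ := exists_eq_leaf hs
    obtain ⟨j, k, rfl⟩ := exists_eq_of_card_two hu
    exact ⟨i, j, k, .inr rfl⟩
  · obtain ⟨i, j, rfl⟩ := exists_eq_of_card_two hs
    obtain ⟨k, rfl⟩ := exists_eq_leaf hu
    exact ⟨i, j, k, .inl rfl⟩

theorem exists_eq_of_card_four (h : Multiset.card t.vars = 4) :
    ∃ i j k l, t = node (node (node (leaf i) (leaf j)) (leaf k)) (leaf l) ∨
      t = node (node (leaf i) (node (leaf j) (leaf k))) (leaf l) ∨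
      t = node (node (leaf i) (leaf j)) (node (leaf k) (leaf l)) ∨
      t = node (leaf i) (node (node (leaf j) (leaf k)) (leaf l)) ∨
      t = node (leaf i) (node (leaf j) (node (leaf k) (leaf l))) := by
  obtain ⟨k, hk, s, u, rfl, hs, hu⟩ := exists_eq_node h
  interval_cases k
  · obtain ⟨i, rfl⟩ := exists_eq_leaf hs
    obtain ⟨j, k, l, rfl | rfl⟩ := exists_eq_of_card_three hu
    · exact ⟨i, j, k, l, by simp⟩
    · exact ⟨i, j, k, l, by simp⟩
  · obtain ⟨i, j, rfl⟩ := exists_eq_of_card_two hs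
    obtain ⟨k, l, rfl⟩ := exists_eq_of_card_two hu
    exact ⟨i, j, k, l, by simp⟩
  · obtain ⟨i, j, k, rfl | rfl⟩ := exists_eq_of_card_three hs
    all_goals
      obtain ⟨l, rfl⟩ := exists_eq_leaf hu
      exact ⟨i, j, k, l, by simp⟩

theorem exists_perm_of_eq_univ {i j k l m : Fin 5}
    (h : ({i} + {j} + {k} + {l} + {m} : Multiset (Fin 5)) = (Finset.univ : Finset (Fin 5)).val) :
    ∃ σ : Equiv.Perm (Fin 5), ⇑σ = ![i, j, k, l, m] := by
  have hl : (List.ofFn ![i, j, k, l, m]).Nodup := by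
    have h₁ : ({i} + {j} + {k} + {l} + {m} : Multiset (Fin 5)) =
        (List.ofFn ![i, j, k, l, m] : Multiset (Fin 5)) := rfl
    rw [← Multiset.coe_nodup, ← h₁, h]
    exact Finset.univ.nodup
  exact ⟨Equiv.ofBijective _ (Finite.injective_iff_bijective.1 (List.nodup_ofFn.1 hl)), rfl⟩

/-- A linear map on a Malcev dialgebra that annihilates the normal forms annihilates all multilinear
monomials of degree 5. -/
theorem map_eval_eq_zero {K V W : Type} [Field K] [CharZero K] [AddCommGroup V] [Module K V]
    [AddCommGroup W] [Module K W] {f : V →ₗ[K] V →ₗ[K] V} (hf : IsMalcevDialgebra f)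
    (π : V →ₗ[K] W) (x : Fin 5 → V)
    (hπ : ∀ q (σ : Equiv.Perm (Fin 5)), π (normalForm (f · ·) q (x ∘ σ)) = 0)
    {t : BTree 5} (ht : t.Multilinear) : π (eval (f · ·) x t) = 0 := by
  have ann (a : V) := annihilatesNormalForms_of_forall_perm f π x hπ a
  have hR {i j k l m : Fin 5}
      (h : ({i} + {j} + {k} + {l} + {m} : Multiset (Fin 5)) = (Finset.univ : Finset (Fin 5)).val) :
      ∃ σ : Equiv.Perm (Fin 5), x ∘ σ = ![x i, x j, x k, x l, x m] := by
    obtain ⟨σ, hσ⟩ := exists_perm_of_eq_univ h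
    exact ⟨σ, by rw [hσ]; ext i; fin_cases i <;> rfl⟩
  have hc : Multiset.card t.vars = 5 := by rw [show t.vars = _ from ht]; rfl
  unfold Multilinear at ht
  obtain ⟨k, hk, s, u, rfl, hs, hu⟩ := exists_eq_node hc
  interval_cases k
  · obtain ⟨i, rfl⟩ := exists_eq_leaf hs
    obtain ⟨j, k, l, m, rfl | rfl | rfl | rfl | rfl⟩ := exists_eq_of_card_four hu <;>
      simp only [vars, ← add_assoc] at ht <;> simp only [eval] <;> have r := hR ht
    · exact AnnihilatesNormalForms.map_four hf (ann _) r
    · rw [hf.right_anticomm₂, map_neg, neg_eq_zero]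
      exact AnnihilatesNormalForms.map_four hf (ann _) ((ann _).swap₂ ((ann _).swap₁ r))
    · exact AnnihilatesNormalForms.map_four' hf (ann _) r
    · rw [hf.right_anticomm', map_neg, neg_eq_zero]
      exact AnnihilatesNormalForms.map_four hf (ann _)
        ((ann _).swap₃ ((ann _).swap₂ ((ann _).swap₁ r)))
    · rw [hf.right_anticomm', map_neg, neg_eq_zero]
      rw [hf.right_anticomm₂, map_neg, neg_eq_zero]
      exact AnnihilatesNormalForms.map_four hf (ann _)
        ((ann _).swap₃ ((ann _).swap₂ ((ann _).swap₁ ((ann _).swap₃ ((ann _).swap₂ r)))))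
  · obtain ⟨i, j, rfl⟩ := exists_eq_of_card_two hs
    obtain ⟨k, l, m, rfl | rfl⟩ := exists_eq_of_card_three hu <;>
      simp only [vars, ← add_assoc] at ht <;> simp only [eval] <;> have r := hR ht
    · exact AnnihilatesNormalForms.map_one_three hf (ann _) r
    · rw [hf.right_anticomm', map_neg, neg_eq_zero]
      exact AnnihilatesNormalForms.map_one_three hf (ann _) ((ann _).swap₃ ((ann _).swap₂ r))
  · obtain ⟨i, j, k, rfl | rfl⟩ := exists_eq_of_card_three hs <;>
      obtain ⟨l, m, rfl⟩ := exists_eq_of_card_two hu <;>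
      simp only [vars, ← add_assoc] at ht <;> simp only [eval] <;> have r := hR ht
    · exact AnnihilatesNormalForms.map_one_one_two hf (ann _) r
    · exact AnnihilatesNormalForms.map_two_two hf (ann _) r
  · obtain ⟨m, rfl⟩ := exists_eq_leaf hu
    obtain ⟨i, j, k, l, rfl | rfl | rfl | rfl | rfl⟩ := exists_eq_of_card_four hs <;>
      simp only [vars, ← add_assoc] at ht <;> simp only [eval] <;> have r := hR ht
    · exact (ann _).word r
    · exact AnnihilatesNormalForms.map_two_one_one (ann _) r
    · exact AnnihilatesNormalForms.map_one_two_one hf (ann _) r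
    · exact AnnihilatesNormalForms.map_three_one hf (ann _) r
    · rw [hf.right_anticomm', map_neg, LinearMap.neg_apply, map_neg, neg_eq_zero]
      exact AnnihilatesNormalForms.map_three_one hf (ann _) ((ann _).swap₂ ((ann _).swap₁ r))

/-- In a Malcev dialgebra, multilinear monomials of degree 5 are combinations of normal forms. -/
theorem eval_mem_span {K V : Type} [Field K] [CharZero K] [AddCommGroup V] [Module K V]
    {f : V →ₗ[K] V →ₗ[K] V} (hf : IsMalcevDialgebra f) (x : Fin 5 → V)
    {t : BTree 5} (ht : t.Multilinear) :
    eval (f · ·) x t ∈ Submodule.span K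
      (Set.range fun p : Fin 4 × Equiv.Perm (Fin 5) => normalForm (f · ·) p.1 (x ∘ p.2)) := by
  rw [← Submodule.Quotient.mk_eq_zero, ← Submodule.mkQ_apply]
  refine map_eval_eq_zero hf _ x (fun q σ => ?_) ht
  rw [Submodule.mkQ_apply, Submodule.Quotient.mk_eq_zero]
  exact Submodule.subset_span ⟨(q, σ), rfl⟩

end BTree

/-- The signs of the products of the octonion units `e_i e_j = ± e_{i xor j}`: bit `8 i + j` of the
mask is set when the sign is negative. -/
def octonionSign (i j : Fin 8) : ℤ :=
  if Nat.testBit 14725346459690379776 (8 * i + j) then -1 else 1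

/-- The structure constants of the commutator of octonion units. -/
def octonionBracket (i j : Fin 8) : ℤ := octonionSign i j - octonionSign j i

/-- The structure constants of the Jacobian of octonion units. -/
def octonionJacobian (i j k : Fin 8) : ℤ :=
  octonionBracket i j * octonionBracket (i ^^^ j) k
    - octonionBracket i k * octonionBracket (i ^^^ k) j
    - octonionBracket j k * octonionBracket i (j ^^^ k)

/-- The structure constants of the normal forms with a Jacobian on octonion units. -/
def octonionNormalForm (q : Fin 3) (h : Fin 5 → Fin 8) : ℤ :=
  ![octonionJacobian (h 0) (h 1) (h 2) * octonionBracket (h 0 ^^^ h 1 ^^^ h 2) (h 3) *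
      octonionBracket (h 0 ^^^ h 1 ^^^ h 2 ^^^ h 3) (h 4),
    octonionJacobian (h 1) (h 2) (h 3) * octonionBracket (h 0) (h 1 ^^^ h 2 ^^^ h 3) *
      octonionBracket (h 0 ^^^ (h 1 ^^^ h 2 ^^^ h 3)) (h 4),
    octonionJacobian (h 1) (h 2) (h 3) * octonionBracket (h 1 ^^^ h 2 ^^^ h 3) (h 4) *
      octonionBracket (h 0) (h 1 ^^^ h 2 ^^^ h 3 ^^^ h 4)] q

/-- Weighted substitutions of octonion units that isolate the normal forms of a given kind. -/
def separatingSubstitutions : Fin 3 → Fin 13 → ℤ × (Fin 5 → Fin 8) :=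
  ![![(9, ![1, 2, 3, 4, 6]), (-6, ![1, 2, 3, 1, 4]), (1, ![1, 2, 3, 4, 5]), (-5, ![1, 2, 4, 7, 4]),
      (-5, ![1, 2, 4, 5, 7]), (-2, ![1, 2, 4, 5, 1]), (-8, ![1, 2, 4, 6, 3]),
      (10, ![1, 2, 4, 6, 6]), (-6, ![1, 2, 4, 4, 7]), (-6, ![1, 2, 4, 2, 6]),
      (-2, ![1, 2, 3, 4, 2]), (-3, ![1, 2, 4, 5, 4]), (6, ![1, 2, 1, 4, 4])],
    ![(-3, ![1, 4, 2, 1, 2]), (4, ![1, 4, 7, 1, 2]), (-2, ![1, 2, 4, 1, 1]),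
      (-2, ![1, 4, 4, 1, 2]), (2, ![1, 1, 4, 4, 2]), (-3, ![1, 3, 2, 4, 2]),
      (-3, ![1, 1, 4, 5, 2]), (-6, ![1, 4, 1, 7, 2]), (-8, ![1, 1, 2, 4, 1]),
      (-3, ![1, 4, 7, 6, 2]), (1, ![1, 1, 4, 7, 2]), (5, ![1, 4, 2, 7, 2]),
      (-6, ![1, 2, 4, 3, 2])],
    ![(6, ![1, 4, 2, 7, 2]), (-1, ![1, 4, 7, 5, 2]), (-2, ![1, 2, 4, 1, 1]),
      (-5, ![1, 2, 4, 7, 1]), (2, ![1, 4, 2, 1, 2]), (4, ![1, 1, 4, 3, 2]),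
      (-1, ![1, 3, 4, 7, 2]), (-1, ![1, 4, 1, 2, 2]), (7, ![1, 2, 4, 5, 1]),
      (-6, ![1, 1, 2, 4, 1]), (4, ![1, 4, 3, 2, 2]), (-5, ![1, 4, 6, 7, 2]),
      (-2, ![1, 4, 1, 5, 2])]]

/-- Permutations of the arguments in which the normal form `q + 1` is alternating. -/
def alternatingPerms (q : Fin 3) : Finset (Equiv.Perm (Fin 5)) :=
  {ρ | ρ 0 = 0 ∧ ρ 4 = 4 ∧ (q = 0 → ρ 3 = 3)}

theorem octonionSign_alternative : ∀ i j k : Fin 8,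
    (octonionSign i j * octonionSign (i ^^^ j) k - octonionSign j k * octonionSign i (j ^^^ k) +
      (octonionSign i k * octonionSign (i ^^^ k) j
        - octonionSign k j * octonionSign i (k ^^^ j)) = 0) ∧
    (octonionSign i j * octonionSign (i ^^^ j) k - octonionSign j k * octonionSign i (j ^^^ k) +
      (octonionSign j i * octonionSign (j ^^^ i) k
        - octonionSign i k * octonionSign j (i ^^^ k)) = 0) := by
  decide +kernel

theorem octonionBracket_malcev : ∀ i j k l : Fin 8,
    octonionBracket i j * octonionBracket (i ^^^ j) k * octonionBracket (i ^^^ j ^^^ k) l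
      - octonionBracket i l * octonionBracket (i ^^^ l) j * octonionBracket (i ^^^ l ^^^ j) k
      - octonionBracket k l * octonionBracket i (k ^^^ l) * octonionBracket (i ^^^ (k ^^^ l)) j
      - octonionBracket i k * octonionBracket j l * octonionBracket (i ^^^ k) (j ^^^ l)
      - octonionBracket j k * octonionBracket (j ^^^ k) l * octonionBracket i (j ^^^ k ^^^ l)
      = 0 := by
  decide +kernel

theorem sum_separatingSubstitutions : ∀ (p q : Fin 3) (ρ : Equiv.Perm (Fin 5)),
    ∑ i, (separatingSubstitutions p i).1 *
        (if ρ 0 = 0 then octonionNormalForm q ((separatingSubstitutions p i).2 ∘ ρ) else 0) =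
      if p = q ∧ ρ ∈ alternatingPerms p then 1728 * (Equiv.Perm.sign ρ : ℤ) else 0 := by
  decide +kernel

section TwistedMul

variable (K : Type*) [Field K]

/-- The bilinear product with `e_i e_j = s i j e_{i xor j}` on the vector space with basis
`e_0, …, e_7`. -/
noncomputable def twistedMul (s : Fin 8 → Fin 8 → ℤ) :
    (Fin 8 →₀ K) →ₗ[K] (Fin 8 →₀ K) →ₗ[K] (Fin 8 →₀ K) :=
  Finsupp.linearCombination K fun i =>
    Finsupp.linearCombination K fun j => Finsupp.single (i ^^^ j) (s i j : K)

variable {K}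

@[simp]
theorem twistedMul_single (s : Fin 8 → Fin 8 → ℤ) (i j : Fin 8) (a b : K) :
    twistedMul K s (Finsupp.single i a) (Finsupp.single j b) =
      Finsupp.single (i ^^^ j) (a * b * s i j) := by
  simp only [twistedMul, Finsupp.linearCombination_single, LinearMap.smul_apply,
    Finsupp.smul_single, smul_eq_mul, mul_assoc]

theorem xor_assoc₈ (i j k : Fin 8) : i ^^^ j ^^^ k = i ^^^ (j ^^^ k) :=
  Fin.xor_assoc (n := 3) rfl i j k

theorem xor_left_comm₈ (i j k : Fin 8) : i ^^^ (j ^^^ k) = j ^^^ (i ^^^ k) := by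
  rw [← xor_assoc₈, Fin.xor_comm i j, xor_assoc₈]

theorem twistedMul_octonionSign_sub (a b : Fin 8 →₀ K) :
    twistedMul K octonionSign a b - twistedMul K octonionSign b a =
      twistedMul K octonionBracket a b := by
  induction a using Finsupp.induction_linear with
  | zero => simp
  | add a a' h h' =>
    simp only [map_add, LinearMap.add_apply, ← h, ← h']
    abel
  | single i a =>
    induction b using Finsupp.induction_linear with
    | zero => simp
    | add b b' h h' =>
      simp only [map_add, LinearMap.add_apply, ← h, ← h']
      abel
    | single j b =>
      rw [twistedMul_single, twistedMul_single, twistedMul_single, Fin.xor_comm j i,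
        ← Finsupp.single_sub, octonionBracket]
      congr 1
      push_cast
      ring

theorem twistedMul_alternative (a b c : Fin 8 →₀ K) :
    (twistedMul K octonionSign (twistedMul K octonionSign a b) c
        - twistedMul K octonionSign a (twistedMul K octonionSign b c)) +
      (twistedMul K octonionSign (twistedMul K octonionSign a c) b
        - twistedMul K octonionSign a (twistedMul K octonionSign c b)) = 0 ∧
    (twistedMul K octonionSign (twistedMul K octonionSign a b) c
        - twistedMul K octonionSign a (twistedMul K octonionSign b c)) +
      (twistedMul K octonionSign (twistedMul K octonionSign b a) c
        - twistedMul K octonionSign b (twistedMul K octonionSign a c)) = 0 := by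
  induction a using Finsupp.induction_linear with
  | zero => simp
  | add a a' h h' =>
    simp only [map_add, LinearMap.add_apply]
    constructor
    · linear_combination (norm := abel) h.1 + h'.1
    · linear_combination (norm := abel) h.2 + h'.2
  | single i a =>
  induction b using Finsupp.induction_linear with
  | zero => simp
  | add b b' h h' =>
    simp only [map_add, LinearMap.add_apply]
    constructor
    · linear_combination (norm := abel) h.1 + h'.1
    · linear_combination (norm := abel) h.2 + h'.2
  | single j b =>
  induction c using Finsupp.induction_linear with
  | zero => simp
  | add c c' h h' =>
    simp only [map_add, LinearMap.add_apply]
    constructor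
    · linear_combination (norm := abel) h.1 + h'.1
    · linear_combination (norm := abel) h.2 + h'.2
  | single k c =>
  obtain ⟨h₁, h₂⟩ := octonionSign_alternative i j k
  apply_fun (Int.cast : ℤ → K) at h₁ h₂
  push_cast at h₁ h₂
  simp only [twistedMul_single]
  simp only [xor_assoc₈, Fin.xor_comm k j, xor_left_comm₈ j i] at *
  simp only [← Finsupp.single_sub, ← Finsupp.single_add, Finsupp.single_eq_zero]
  constructor
  · linear_combination a * b * c * h₁
  · linear_combination a * b * c * h₂

theorem twistedMul_assoc_reverse (a b c : Fin 8 →₀ K) :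
    (twistedMul K octonionSign (twistedMul K octonionSign a b) c
        - twistedMul K octonionSign a (twistedMul K octonionSign b c)) +
      (twistedMul K octonionSign (twistedMul K octonionSign c b) a
        - twistedMul K octonionSign c (twistedMul K octonionSign b a)) = 0 := by
  linear_combination (norm := abel) (twistedMul_alternative a b c).1
    - (twistedMul_alternative a c b).2 + (twistedMul_alternative c a b).1

theorem twistedMul_assoc_cycle (a b c : Fin 8 →₀ K) :
    (twistedMul K octonionSign (twistedMul K octonionSign a b) c
        - twistedMul K octonionSign a (twistedMul K octonionSign b c)) -
      (twistedMul K octonionSign (twistedMul K octonionSign b c) a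
        - twistedMul K octonionSign b (twistedMul K octonionSign c a)) = 0 := by
  linear_combination (norm := abel) (twistedMul_alternative a b c).2
    - (twistedMul_alternative b a c).1

theorem isMalcevDialgebra_octonionBracket : IsMalcevDialgebra (twistedMul K octonionBracket) where
  right_anticomm a b c := by
    rw [← map_add, ← twistedMul_octonionSign_sub b c, ← twistedMul_octonionSign_sub c b]
    simp
  malcev a b c d := by
    induction a using Finsupp.induction_linear with
    | zero => simp
    | add a a' h h' =>
      simp only [map_add, LinearMap.add_apply]
      linear_combination (norm := abel) h + h'
    | single i a =>
    induction b using Finsupp.induction_linear with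
    | zero => simp
    | add b b' h h' =>
      simp only [map_add, LinearMap.add_apply]
      linear_combination (norm := abel) h + h'
    | single j b =>
    induction c using Finsupp.induction_linear with
    | zero => simp
    | add c c' h h' =>
      simp only [map_add, LinearMap.add_apply]
      linear_combination (norm := abel) h + h'
    | single k c =>
    induction d using Finsupp.induction_linear with
    | zero => simp
    | add d d' h h' =>
      simp only [map_add, LinearMap.add_apply]
      linear_combination (norm := abel) h + h'
    | single l d =>
    have h := congrArg (Int.cast : ℤ → K) (octonionBracket_malcev i j k l)
    push_cast at h
    have e₁ : i ^^^ l ^^^ j ^^^ k = i ^^^ j ^^^ k ^^^ l := by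
      rw [xor_assoc₈ i l j, Fin.xor_comm l j, ← xor_assoc₈, xor_assoc₈ _ l k, Fin.xor_comm l k,
        ← xor_assoc₈]
    have e₂ : i ^^^ (k ^^^ l) ^^^ j = i ^^^ j ^^^ k ^^^ l := by
      rw [xor_assoc₈ i, Fin.xor_comm _ j, ← xor_assoc₈, ← xor_assoc₈]
    have e₃ : i ^^^ k ^^^ (j ^^^ l) = i ^^^ j ^^^ k ^^^ l := by
      rw [← xor_assoc₈, xor_assoc₈ i k j, Fin.xor_comm k j, ← xor_assoc₈]
    have e₄ : i ^^^ (j ^^^ k ^^^ l) = i ^^^ j ^^^ k ^^^ l := by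
      rw [← xor_assoc₈, ← xor_assoc₈]
    simp only [twistedMul_single, e₁, e₂, e₃, e₄]
    simp only [← Finsupp.single_sub, Finsupp.single_eq_zero]
    linear_combination a * b * c * d * h

end TwistedMul

section Split

variable {K A : Type*} [Field K] [AddCommGroup A] [Module K A]

/-- The product `(a, m) (b, n) = (a b, m b)` on `A × A`. -/
def splitLeft (B : A →ₗ[K] A →ₗ[K] A) : A × A →ₗ[K] A × A →ₗ[K] A × A :=
  LinearMap.mk₂ K (fun x y => (B x.1 y.1, B x.2 y.1)) (by simp) (by simp) (by simp) (by simp)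

/-- The product `(a, m) (b, n) = (a b, a n)` on `A × A`. -/
def splitRight (B : A →ₗ[K] A →ₗ[K] A) : A × A →ₗ[K] A × A →ₗ[K] A × A :=
  LinearMap.mk₂ K (fun x y => (B x.1 y.1, B x.1 y.2)) (by simp) (by simp) (by simp) (by simp)

/-- The product `(a, m) (b, n) = (a b, 0)` on `A × A`. -/
def splitZero (B : A →ₗ[K] A →ₗ[K] A) : A × A →ₗ[K] A × A →ₗ[K] A × A :=
  LinearMap.mk₂ K (fun x y => (B x.1 y.1, 0)) (by simp) (by simp) (by simp) (by simp)

@[simp]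
theorem splitLeft_apply (B : A →ₗ[K] A →ₗ[K] A) (x y : A × A) :
    splitLeft B x y = (B x.1 y.1, B x.2 y.1) := rfl

@[simp]
theorem splitRight_apply (B : A →ₗ[K] A →ₗ[K] A) (x y : A × A) :
    splitRight B x y = (B x.1 y.1, B x.1 y.2) := rfl

@[simp]
theorem splitZero_apply (B : A →ₗ[K] A →ₗ[K] A) (x y : A × A) :
    splitZero B x y = (B x.1 y.1, 0) := rfl

theorem IsMalcevDialgebra.splitLeft {B : A →ₗ[K] A →ₗ[K] A} (hB : IsMalcevDialgebra B) :
    IsMalcevDialgebra (splitLeft B) where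
  right_anticomm _ _ _ := Prod.ext (hB.right_anticomm _ _ _) (hB.right_anticomm _ _ _)
  malcev _ _ _ _ := Prod.ext (hB.malcev _ _ _ _) (hB.malcev _ _ _ _)

theorem normalForm_splitLeft_snd (B : A →ₗ[K] A →ₗ[K] A) (q : Fin 4) (y : Fin 5 → A × A) :
    (normalForm (splitLeft B · ·) q y).2 =
      normalForm (B · ·) q ![(y 0).2, (y 1).1, (y 2).1, (y 3).1, (y 4).1] := by
  fin_cases q <;> rfl

end Split

section Word

variable (K A : Type*) [Field K] [Ring A] [Algebra K A]

/-- The dicommutator `⟨(a, m), (b, n)⟩ = (a b - b a, m b)` of an associative algebra acting on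
itself from the right, with the zero action from the left. -/
def wordBracket : A × A →ₗ[K] A × A →ₗ[K] A × A :=
  splitLeft (LinearMap.mul K A) - (splitZero (LinearMap.mul K A)).flip

variable {A}

@[simp]
theorem wordBracket_apply (x y : A × A) :
    wordBracket K A x y = (x.1 * y.1 - y.1 * x.1, x.2 * y.1) := by
  simp [wordBracket]

theorem isMalcevDialgebra_wordBracket : IsMalcevDialgebra (wordBracket K A) where
  right_anticomm a b c := by ext <;> simp <;> noncomm_ring
  malcev a b c d := by ext <;> simp <;> noncomm_ring

theorem normalForm_zero_wordBracket_snd (y : Fin 5 → A × A) :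
    (normalForm (wordBracket K A · ·) 0 y).2 =
      (y 0).2 * (y 1).1 * (y 2).1 * (y 3).1 * (y 4).1 := by
  simp [normalForm]

theorem normalForm_succ_wordBracket_snd (q : Fin 3) (y : Fin 5 → A × A) :
    (normalForm (wordBracket K A · ·) q.succ y).2 = 0 := by
  fin_cases q <;> simp [normalForm, jacobian] <;> noncomm_ring

end Word

section Hom

variable {K : Type*} [Field K]

/-- The componentwise product on a product of two algebras. -/
def prodMul {V W : Type*} [AddCommGroup V] [Module K V] [AddCommGroup W] [Module K W]
    (f : V →ₗ[K] V →ₗ[K] V) (g : W →ₗ[K] W →ₗ[K] W) : V × W →ₗ[K] V × W →ₗ[K] V × W :=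
  LinearMap.mk₂ K (fun x y => (f x.1 y.1, g x.2 y.2)) (by simp) (by simp) (by simp) (by simp)

/-- The componentwise product on a power of an algebra. -/
def piMul {V : Type*} [AddCommGroup V] [Module K V] (ι : Type*) (f : V →ₗ[K] V →ₗ[K] V) :
    (ι → V) →ₗ[K] (ι → V) →ₗ[K] (ι → V) :=
  LinearMap.mk₂ K (fun x y i => f (x i) (y i)) (by intros; ext; simp) (by intros; ext; simp)
    (by intros; ext; simp) (by intros; ext; simp)

namespace IsMalcevDialgebra

theorem prodMul {V W : Type*} [AddCommGroup V] [Module K V] [AddCommGroup W] [Module K W]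
    {f : V →ₗ[K] V →ₗ[K] V} {g : W →ₗ[K] W →ₗ[K] W} (hf : IsMalcevDialgebra f)
    (hg : IsMalcevDialgebra g) : IsMalcevDialgebra (prodMul f g) where
  right_anticomm _ _ _ := Prod.ext (hf.right_anticomm _ _ _) (hg.right_anticomm _ _ _)
  malcev _ _ _ _ := Prod.ext (hf.malcev _ _ _ _) (hg.malcev _ _ _ _)

theorem piMul {V : Type*} [AddCommGroup V] [Module K V] (ι : Type*)
    {f : V →ₗ[K] V →ₗ[K] V} (hf : IsMalcevDialgebra f) : IsMalcevDialgebra (piMul ι f) where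
  right_anticomm _ _ _ := funext fun _ => hf.right_anticomm _ _ _
  malcev _ _ _ _ := funext fun _ => hf.malcev _ _ _ _

end IsMalcevDialgebra

theorem BTree.map_eval {n : ℕ} {V W : Type} {m : V → V → V} {m' : W → W → W} (φ : V → W)
    (hφ : ∀ a b, φ (m a b) = m' (φ a) (φ b)) (x : Fin n → V) (t : BTree n) :
    φ (eval m x t) = eval m' (φ ∘ x) t := by
  induction t with
  | leaf i => rfl
  | node s t hs ht => simp only [eval, hφ, hs, ht]

theorem map_normalForm {V W F : Type*} [AddCommGroup V] [AddCommGroup W] [FunLike F V W]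
    [AddMonoidHomClass F V W] {m : V → V → V} {m' : W → W → W} (φ : F)
    (hφ : ∀ a b, φ (m a b) = m' (φ a) (φ b)) (q : Fin 4) (y : Fin 5 → V) :
    φ (normalForm m q y) = normalForm m' q (φ ∘ y) := by
  fin_cases q <;> simp [normalForm, jacobian, hφ]

end Hom

/-- The coefficients of a multilinear polynomial with respect to the normal forms can be chosen
simultaneously for several evaluations in Malcev dialgebras. -/
theorem exists_normalForm_coefficients {K V W U ι : Type} [Field K] [CharZero K]
    [AddCommGroup V] [Module K V] [AddCommGroup W] [Module K W] [AddCommGroup U] [Module K U]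
    {f : V →ₗ[K] V →ₗ[K] V} {g : W →ₗ[K] W →ₗ[K] W} {h : U →ₗ[K] U →ₗ[K] U}
    (hf : IsMalcevDialgebra f) (hg : IsMalcevDialgebra g) (hh : IsMalcevDialgebra h)
    (P : BTree 5 →₀ K) (hml : ∀ t ∈ P.support, t.Multilinear)
    (x : Fin 5 → V) (y : ι → Fin 5 → W) (z : Fin 5 → U) :
    ∃ c : Fin 4 → Equiv.Perm (Fin 5) → K,
      P.sum (fun t k => k • BTree.eval (f · ·) x t) =
        ∑ q, ∑ σ, c q σ • normalForm (f · ·) q (x ∘ σ) ∧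
      (∀ i, P.sum (fun t k => k • BTree.eval (g · ·) (y i) t) =
        ∑ q, ∑ σ, c q σ • normalForm (g · ·) q (y i ∘ σ)) ∧
      P.sum (fun t k => k • BTree.eval (h · ·) z t) =
        ∑ q, ∑ σ, c q σ • normalForm (h · ·) q (z ∘ σ) := by
  set F := prodMul f (prodMul (piMul ι g) h)
  have hF : IsMalcevDialgebra F := hf.prodMul ((hg.piMul ι).prodMul hh)
  set X : Fin 5 → V × (ι → W) × U := fun j => (x j, fun i => y i j, z j)
  have hmem : P.sum (fun t k => k • BTree.eval (F · ·) X t) ∈ Submodule.span K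
      (Set.range fun p : Fin 4 × Equiv.Perm (Fin 5) => normalForm (F · ·) p.1 (X ∘ p.2)) :=
    Submodule.sum_mem _ fun t ht =>
      Submodule.smul_mem _ _ (BTree.eval_mem_span hF X (hml t ht))
  obtain ⟨c, hc⟩ := (Submodule.mem_span_range_iff_exists_fun K).1 hmem
  have key {N : Type} [AddCommGroup N] [Module K N] (m : N →ₗ[K] N →ₗ[K] N)
      (φ : V × (ι → W) × U →ₗ[K] N) (hφ : ∀ a b, φ (F a b) = m (φ a) (φ b)) :
      P.sum (fun t k => k • BTree.eval (m · ·) (φ ∘ X) t) =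
        ∑ q, ∑ σ, c (q, σ) • normalForm (m · ·) q ((φ ∘ X) ∘ σ) := by
    have h₁ := (congrArg φ hc).symm
    rw [map_finsuppSum, map_sum, Fintype.sum_prod_type] at h₁
    simpa only [map_smul, BTree.map_eval (m := (F · ·)) (m' := (m · ·)) φ hφ,
      map_normalForm (m := (F · ·)) (m' := (m · ·)) φ hφ, Function.comp_assoc] using h₁
  exact ⟨fun q σ => c (q, σ), key f (LinearMap.fst ..) fun _ _ => rfl,
    fun i => key g ((LinearMap.proj i : (ι → W) →ₗ[K] W) ∘ₗ LinearMap.fst .. ∘ₗ LinearMap.snd ..)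
      fun _ _ => rfl,
    key h (LinearMap.snd .. ∘ₗ LinearMap.snd ..) fun _ _ => rfl⟩

theorem normalForm_twistedMul {K : Type*} [Field K] (q : Fin 3) (h : Fin 5 → Fin 8)
    (w : Fin 5 → K) :
    Finsupp.linearCombination K (fun _ => (1 : K))
        (normalForm (twistedMul K octonionBracket · ·) q.succ fun i => Finsupp.single (h i) (w i)) =
      w 0 * w 1 * w 2 * w 3 * w 4 * octonionNormalForm q h := by
  have jac (i j k : Fin 8) (a b c : K) :
      jacobian (twistedMul K octonionBracket · ·) (Finsupp.single i a) (Finsupp.single j b)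
        (Finsupp.single k c) =
      Finsupp.single (i ^^^ j ^^^ k) (a * b * c * octonionJacobian i j k) := by
    simp only [jacobian, twistedMul_single]
    rw [xor_assoc₈ i k j, Fin.xor_comm k j, ← xor_assoc₈, ← Finsupp.single_sub,
      ← Finsupp.single_sub, octonionJacobian]
    congr 1
    push_cast
    ring
  fin_cases q <;>
    simp [normalForm, jac, octonionNormalForm, -Finsupp.single_mul] <;> ring

/-- The substitution of octonion units `e_{g i}` in which the variable `x_0` is the center. -/
noncomputable def unitSubstitution (K : Type*) [Field K] (g : Fin 5 → Fin 8) (i : Fin 5) :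
    (Fin 8 →₀ K) × (Fin 8 →₀ K) :=
  (Finsupp.single (g i) (if i = 0 then 0 else 1), Finsupp.single (g i) (if i = 0 then 1 else 0))

theorem normalForm_unitSubstitution {K : Type*} [Field K] (q : Fin 3) (g : Fin 5 → Fin 8)
    (ρ : Equiv.Perm (Fin 5)) :
    Finsupp.linearCombination K (fun _ => (1 : K)) (normalForm
        (splitLeft (twistedMul K octonionBracket) · ·) q.succ (unitSubstitution K g ∘ ρ)).2 =
      ((if ρ 0 = 0 then octonionNormalForm q (g ∘ ρ) else 0 : ℤ) : K) := by
  have h₁ : ![(unitSubstitution K g (ρ 0)).2, (unitSubstitution K g (ρ 1)).1,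
      (unitSubstitution K g (ρ 2)).1, (unitSubstitution K g (ρ 3)).1,
      (unitSubstitution K g (ρ 4)).1] = fun i => Finsupp.single ((g ∘ ρ) i)
        (![if ρ 0 = 0 then 1 else 0, if ρ 1 = 0 then 0 else 1, if ρ 2 = 0 then 0 else 1,
          if ρ 3 = 0 then 0 else 1, if ρ 4 = 0 then 0 else 1] i : K) := by
    funext i
    fin_cases i <;> rfl
  rw [normalForm_splitLeft_snd]
  simp only [Function.comp_apply] at h₁ ⊢
  rw [h₁]
  have h₂ := normalForm_twistedMul q (g ∘ ρ)
    (![if ρ 0 = 0 then 1 else 0, if ρ 1 = 0 then 0 else 1, if ρ 2 = 0 then 0 else 1,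
          if ρ 3 = 0 then 0 else 1, if ρ 4 = 0 then 0 else 1] : Fin 5 → K)
  refine h₂.trans ?_
  by_cases h₀ : ρ 0 = 0
  · have h (i : Fin 5) (hi : i ≠ 0) : ρ i ≠ 0 := fun hρ => hi (ρ.injective (hρ.trans h₀.symm))
    simp [h₀, h 1, h 2, h 3, h 4]
  · simp [h₀]

/-- Vanishing on octonions forces the alternating sums of the coefficients to vanish. -/
theorem sum_alternatingPerms_eq_zero {K : Type*} [Field K] [CharZero K]
    (c : Fin 4 → Equiv.Perm (Fin 5) → K) (hc₀ : ∀ σ, c 0 σ = 0)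
    (hc : ∀ y : Fin 5 → (Fin 8 →₀ K) × (Fin 8 →₀ K),
      ∑ q, ∑ σ, c q σ • normalForm (splitLeft (twistedMul K octonionBracket) · ·) q (y ∘ σ) = 0)
    (p : Fin 3) (τ : Equiv.Perm (Fin 5)) :
    ∑ ρ ∈ alternatingPerms p, c p.succ (τ * ρ) * (Equiv.Perm.sign ρ : ℤ) = 0 := by
  have eqn (g : Fin 5 → Fin 8) : ∑ q : Fin 3, ∑ ρ, c q.succ (τ * ρ) *
      ((if ρ 0 = 0 then octonionNormalForm q (g ∘ ρ) else 0 : ℤ) : K) = 0 := by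
    have h := congrArg (fun v => Finsupp.linearCombination K (fun _ => (1 : K)) v.2)
      (hc (unitSubstitution K g ∘ ⇑τ⁻¹))
    simp only [Fin.sum_univ_succ (n := 3), hc₀, zero_smul, Finset.sum_const_zero, zero_add,
      Prod.snd_sum, Prod.snd_zero, Prod.smul_snd, map_sum, map_smul, map_zero, smul_eq_mul] at h
    rw [← h]
    refine Finset.sum_congr rfl fun q _ => ?_
    refine Eq.trans (Finset.sum_congr rfl fun ρ _ => ?_) (Equiv.sum_comp (Equiv.mulLeft τ) _)
    rw [← normalForm_unitSubstitution, Function.comp_assoc, ← Equiv.Perm.coe_mul,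
      Equiv.coe_mulLeft, inv_mul_cancel_left]
  have h : ∑ i, ((separatingSubstitutions p i).1 : K) * ∑ q : Fin 3, ∑ ρ, c q.succ (τ * ρ) *
      ((if ρ 0 = 0 then octonionNormalForm q ((separatingSubstitutions p i).2 ∘ ρ) else 0 : ℤ) : K)
      = 0 := by
    simp only [eqn, mul_zero, Finset.sum_const_zero]
  have h' : ∑ q : Fin 3, ∑ ρ, c q.succ (τ * ρ) * ((∑ i, (separatingSubstitutions p i).1 *
      (if ρ 0 = 0 then octonionNormalForm q ((separatingSubstitutions p i).2 ∘ ρ) else 0) : ℤ) : K)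
      = 0 := by
    rw [← h]
    simp only [Finset.mul_sum, Int.cast_sum, Int.cast_mul]
    refine Eq.trans (Finset.sum_congr rfl fun q _ => ?_) Finset.sum_comm
    refine Eq.trans (Finset.sum_congr rfl fun ρ _ => ?_) Finset.sum_comm
    exact Finset.sum_congr rfl fun i _ => mul_left_comm _ _ _
  simp only [sum_separatingSubstitutions] at h'
  rw [Fintype.sum_eq_single p fun q hq => Finset.sum_eq_zero fun ρ _ => by simp [hq.symm]] at h'
  refine (mul_eq_zero_iff_left (show (1728 : K) ≠ 0 by norm_num)).1 (Eq.trans ?_ h')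
  simp only [true_and, Int.cast_ite, Int.cast_zero, mul_ite, mul_zero, Finset.sum_ite_mem,
    Finset.univ_inter, Finset.mul_sum]
  exact Finset.sum_congr rfl fun ρ _ => by push_cast; ring

namespace IsMalcevDialgebra

variable {K V : Type*} [Field K] [AddCommGroup V] [Module K V] {f : V →ₗ[K] V →ₗ[K] V}

theorem jacobian_skew (hf : IsMalcevDialgebra f) (a b c : V) :
    jacobian (f · ·) a c b = -jacobian (f · ·) a b c := by
  simp only [jacobian, hf.right_anticomm' a c b]
  abel

theorem mul_jacobian_skew (hf : IsMalcevDialgebra f) (a b c d : V) :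
    f a (jacobian (f · ·) c b d) = -f a (jacobian (f · ·) b c d) := by
  simp only [jacobian, map_sub, hf.right_anticomm₂ a c b d, hf.right_anticomm' a c (f b d),
    hf.right_anticomm' a (f c d) b]
  abel

theorem mul_jacobian_mul_skew (hf : IsMalcevDialgebra f) (a b c d e : V) :
    f a (f (jacobian (f · ·) c b d) e) = -f a (f (jacobian (f · ·) b c d) e) := by
  rw [hf.right_anticomm' a _ e, hf.mul_jacobian_skew, hf.right_anticomm' a _ e, map_neg]

theorem normalForm_comp_swap₂₃ (hf : IsMalcevDialgebra f) (q : Fin 3) (hq : q ≠ 0)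
    (y : Fin 5 → V) :
    normalForm (f · ·) q.succ (y ∘ Equiv.swap 2 3) = -normalForm (f · ·) q.succ y := by
  have h₀ : Equiv.swap (2 : Fin 5) 3 0 = 0 := by decide
  have h₁ : Equiv.swap (2 : Fin 5) 3 1 = 1 := by decide
  have h₄ : Equiv.swap (2 : Fin 5) 3 4 = 4 := by decide
  fin_cases q
  · exact absurd rfl hq
  all_goals simp [normalForm, h₀, h₁, h₄, hf.jacobian_skew (y 1) (y 2) (y 3)]

theorem normalForm_comp_swap₁₂ (hf : IsMalcevDialgebra f) (q : Fin 3) (y : Fin 5 → V) :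
    normalForm (f · ·) q.succ (y ∘ Equiv.swap 1 2) = -normalForm (f · ·) q.succ y := by
  have h₀ : Equiv.swap (1 : Fin 5) 2 0 = 0 := by decide
  have h₃ : Equiv.swap (1 : Fin 5) 2 3 = 3 := by decide
  have h₄ : Equiv.swap (1 : Fin 5) 2 4 = 4 := by decide
  fin_cases q <;>
    simp [normalForm, h₀, h₃, h₄, hf.jacobian_skew (y 0) (y 1) (y 2),
      hf.mul_jacobian_skew (y 0) (y 1) (y 2) (y 3), hf.mul_jacobian_mul_skew _ (y 1) (y 2) (y 3)]

theorem normalForm_comp_of_mem (hf : IsMalcevDialgebra f) (q : Fin 3) {ρ : Equiv.Perm (Fin 5)}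
    (hρ : ρ ∈ alternatingPerms q) (y : Fin 5 → V) :
    normalForm (f · ·) q.succ (y ∘ ρ) =
      ((Equiv.Perm.sign ρ : ℤ) : K) • normalForm (f · ·) q.succ y := by
  have key : ∀ q : Fin 3, ∀ ρ ∈ alternatingPerms q, ρ = 1 ∨ ρ = Equiv.swap 1 2 ∨ q ≠ 0 ∧
      (ρ = Equiv.swap 2 3 ∨ ρ = Equiv.swap 1 2 * Equiv.swap 2 3 ∨
        ρ = Equiv.swap 2 3 * Equiv.swap 1 2 ∨
        ρ = Equiv.swap 1 2 * Equiv.swap 2 3 * Equiv.swap 1 2) := by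
    decide +kernel
  have s₁ : Equiv.Perm.sign (Equiv.swap (1 : Fin 5) 2) = -1 := Equiv.Perm.sign_swap (by decide)
  have s₂ : Equiv.Perm.sign (Equiv.swap (2 : Fin 5) 3) = -1 := Equiv.Perm.sign_swap (by decide)
  obtain rfl | rfl | ⟨hq, h⟩ := key q ρ hρ
  · simp
  · simp [s₁, hf.normalForm_comp_swap₁₂]
  · obtain rfl | rfl | rfl | rfl := h <;>
      simp [s₁, s₂, ← Function.comp_assoc, hf.normalForm_comp_swap₁₂,
        hf.normalForm_comp_swap₂₃ q hq]

end IsMalcevDialgebra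

theorem sum_smul_normalForm_eq_zero {K V : Type*} [Field K] [CharZero K] [AddCommGroup V]
    [Module K V] {f : V →ₗ[K] V →ₗ[K] V} (hf : IsMalcevDialgebra f) (q : Fin 3)
    (c : Equiv.Perm (Fin 5) → K)
    (hc : ∀ τ, ∑ ρ ∈ alternatingPerms q, c (τ * ρ) * (Equiv.Perm.sign ρ : ℤ) = 0)
    (x : Fin 5 → V) : ∑ σ, c σ • normalForm (f · ·) q.succ (x ∘ σ) = 0 := by
  have hcard : ((alternatingPerms q).card : K) ≠ 0 :=
    Nat.cast_ne_zero.2 (Finset.card_ne_zero_of_mem (a := 1) (by simp [alternatingPerms]))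
  refine (smul_eq_zero_iff_right hcard).1 ?_
  calc ((alternatingPerms q).card : K) • ∑ σ, c σ • normalForm (f · ·) q.succ (x ∘ σ)
      = ∑ ρ ∈ alternatingPerms q, ∑ σ, c σ • normalForm (f · ·) q.succ (x ∘ σ) := by
        rw [Finset.sum_const, Nat.cast_smul_eq_nsmul]
    _ = ∑ ρ ∈ alternatingPerms q, ∑ τ : Equiv.Perm (Fin 5),
          (c (τ * ρ) * (Equiv.Perm.sign ρ : ℤ)) • normalForm (f · ·) q.succ (x ∘ τ) := by
        refine Finset.sum_congr rfl fun ρ hρ => ?_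
        rw [← Equiv.sum_comp (Equiv.mulRight ρ)]
        refine Finset.sum_congr rfl fun τ _ => ?_
        rw [Equiv.coe_mulRight, Equiv.Perm.coe_mul, ← Function.comp_assoc,
          hf.normalForm_comp_of_mem q hρ, smul_smul]
    _ = 0 := by
        rw [Finset.sum_comm]
        exact Finset.sum_eq_zero fun τ _ => by rw [← Finset.sum_smul, hc, zero_smul]

/-- The pair of generators of the free associative algebra and its regular module. -/
noncomputable def wordGenerator (K : Type*) [Field K] (i : Fin 5) :
    MonoidAlgebra K (FreeMonoid (Fin 5)) × MonoidAlgebra K (FreeMonoid (Fin 5)) :=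
  (MonoidAlgebra.of K _ (FreeMonoid.of i), MonoidAlgebra.of K _ (FreeMonoid.of i))

/-- Vanishing on the free associative algebra forces the coefficients of the words to vanish. -/
theorem word_coefficient_eq_zero {K : Type*} [Field K] (c : Fin 4 → Equiv.Perm (Fin 5) → K)
    (hc : ∑ q, ∑ σ, c q σ • normalForm (wordBracket K (MonoidAlgebra K (FreeMonoid (Fin 5))) · ·) q
      (wordGenerator K ∘ σ) = 0) (τ : Equiv.Perm (Fin 5)) : c 0 τ = 0 := by
  let w (σ : Equiv.Perm (Fin 5)) : FreeMonoid (Fin 5) := FreeMonoid.ofList (List.ofFn σ)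
  have hw : Function.Injective w := fun σ σ' h =>
    DFunLike.coe_injective (List.ofFn_injective (FreeMonoid.ofList.injective h))
  have h := congrArg Prod.snd hc
  simp only [Fin.sum_univ_succ (n := 3), Prod.snd_add, Prod.snd_sum, Prod.smul_snd,
    normalForm_succ_wordBracket_snd, smul_zero, Finset.sum_const_zero, add_zero, Prod.snd_zero,
    normalForm_zero_wordBracket_snd] at h
  have hprod (σ : Equiv.Perm (Fin 5)) : ((wordGenerator K ∘ σ) 0).2 * ((wordGenerator K ∘ σ) 1).1 *
      ((wordGenerator K ∘ σ) 2).1 * ((wordGenerator K ∘ σ) 3).1 * ((wordGenerator K ∘ σ) 4).1 =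
      MonoidAlgebra.single (w σ) 1 := by
    simp only [wordGenerator, Function.comp_apply, ← map_mul]
    rfl
  simp only [hprod] at h
  have hli := (MonoidAlgebra.basis (FreeMonoid (Fin 5)) K).linearIndependent.comp w hw
  exact Fintype.linearIndependent_iff.1 hli (c 0) (by simpa using h) τ

/-- Over a field `K` of characteristic 0, every multilinear polynomial identity `P` of degree 5 satisfied by the dicommutator in every alternative dialgebra over `K` is satisfied in every Malcev dialgebra over `K`; there are no special identities for Malcev dialgebras in degree 5. -/
theorem degree5_no_special_identities (K : Type) [Field K]
    [CharZero K]
    (P : BTree 5 →₀ K) (hml : ∀ t ∈ P.support, t.Multilinear)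
    (hvanish : ∀ (D : Type) [AddCommGroup D] [Module K D]
      (l r : D →ₗ[K] D →ₗ[K] D),
      (∀ a b c : D, r (l a b) c = r (r a b) c) →
      (∀ a b c : D, l a (l b c) = l a (r b c)) →
      (∀ a b c : D, (l (l a b) c - l a (l b c)) + (r (r c b) a - r c (r b a)) = 0) →
      (∀ a b c : D, (l (l a b) c - l a (l b c)) - (r (r b c) a - r b (r c a)) = 0) →
      (∀ a b c : D, (l (r a b) c - r a (l b c)) + (r (r a c) b - r a (r c b)) = 0) →
      ∀ x : Fin 5 → D,
        P.sum (fun t k => k • BTree.eval (fun a b => l a b - r b a) x t) = 0) :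
    ∀ (M : Type) [AddCommGroup M] [Module K M] (f : M →ₗ[K] M →ₗ[K] M),
      (∀ a b c : M, f a (f b c) + f a (f c b) = 0) →
      (∀ a b c d : M,
        f (f (f a b) c) d - f (f (f a d) b) c - f (f a (f c d)) b
          - f (f a c) (f b d) - f a (f (f b c) d) = 0) →
      ∀ x : Fin 5 → M,
        P.sum (fun t k => k • BTree.eval (fun a b => f a b) x t) = 0 := by
  intro M _ _ f h₁ h₂ x
  have hf : IsMalcevDialgebra f := ⟨h₁, h₂⟩
  obtain ⟨c, hx, hy, hz⟩ := exists_normalForm_coefficients hf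
    (isMalcevDialgebra_octonionBracket (K := K)).splitLeft
    (isMalcevDialgebra_wordBracket K (A := MonoidAlgebra K (FreeMonoid (Fin 5)))) P hml x
    (id : (Fin 5 → (Fin 8 →₀ K) × (Fin 8 →₀ K)) → _) (wordGenerator K)
  have hword : ∀ τ, c 0 τ = 0 := by
    refine word_coefficient_eq_zero c (hz.symm.trans ?_)
    refine Eq.trans ?_ (hvanish _ (splitLeft (LinearMap.mul K _)) (splitZero (LinearMap.mul K _))
      ?_ ?_ ?_ ?_ ?_ (wordGenerator K))
    · rfl
    all_goals intro a b c; simp [mul_assoc]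
  have hoct (y : Fin 5 → (Fin 8 →₀ K) × (Fin 8 →₀ K)) :
      ∑ q, ∑ σ, c q σ • normalForm (splitLeft (twistedMul K octonionBracket) · ·) q (y ∘ σ)
        = 0 := by
    refine (hy y).symm.trans ?_
    have hbr : (fun a b => splitLeft (twistedMul K octonionBracket) a b) = fun a b =>
        splitLeft (twistedMul K octonionSign) a b - splitRight (twistedMul K octonionSign) b a := by
      funext a b
      simp [← twistedMul_octonionSign_sub]
    rw [hbr]
    refine hvanish _ (splitLeft (twistedMul K octonionSign))
      (splitRight (twistedMul K octonionSign)) ?_ ?_ ?_ ?_ ?_ y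
    · intros; simp only [splitLeft_apply, splitRight_apply]
    · intros; simp only [splitLeft_apply, splitRight_apply]
    · exact fun a b c => Prod.ext (twistedMul_assoc_reverse _ _ _) (twistedMul_assoc_reverse _ _ _)
    · exact fun a b c => Prod.ext (twistedMul_assoc_cycle _ _ _) (twistedMul_assoc_cycle _ _ _)
    · exact fun a b c => Prod.ext (twistedMul_alternative _ _ _).1 (twistedMul_alternative _ _ _).1
  rw [hx, Fin.sum_univ_succ]
  simp only [hword, zero_smul, Finset.sum_const_zero, zero_add]
  exact Finset.sum_eq_zero fun q _ => sum_smul_normalForm_eq_zero hf q (c q.succ)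
    (sum_alternatingPerms_eq_zero c hword hoct q) x
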